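/- arXiv:0807.3632 — 2 statements merged into one kernel-verified Lean document; each statement's English description precedes it below -/
import Mathlib

section
/- Let G = (V,E) be a finite connected undirected graph with positive symmetric edge weights ω, let h_{ij} denote the hitting time of the random walk on G, let R_{ij} denote the effective resistance between i and j, and let ω(k) and ω(G) be the total weight at vertex k and of the graph respectively. Then for all vertices i and j, h_{ij} = ω(G)·R_{ij} + (1/2)·Σ_{k∈V} ω(k)·(R_{jk} − R_{ik}). -/
open Finset

variable {V : Type*}

/-- The total weight incident to a vertex: `ω(i) = Σ_l ω(i,l)`. -/
noncomputable def vWeight [Fintype V] (w : V → V → ℝ) (i : V) : ℝ :=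
  ∑ l, w i l

/-- The total weight of the graph (each edge counted once): `ω(G)`. -/
noncomputable def gWeight [Fintype V] (w : V → V → ℝ) : ℝ :=
  (∑ i, ∑ l, w i l) / 2

/-- Transition probabilities of the random walk on the weighted graph:
from `i`, move to `l` with probability `ω(i,l)/ω(i)`. -/
noncomputable def walkStep [Fintype V] (w : V → V → ℝ) (i l : V) : ℝ :=
  w i l / vWeight w i

/-- `w` is a system of positive symmetric edge weights on a finite connected undirected
graph: symmetric, nonnegative, zero on the diagonal (and on non-edges), and the graph
whose edges are the pairs with positive weight is connected. -/
def IsWeight [Fintype V] (w : V → V → ℝ) : Prop :=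
  (∀ a b, w a b = w b a) ∧ (∀ a b, 0 ≤ w a b) ∧ (∀ a, w a a = 0) ∧
    (∀ a b, Relation.ReflTransGen (fun x y => 0 < w x y) a b)

/-- `hitSurv p j n i` is the probability that the Markov chain with transition kernel `p`
started at `i` has not visited `j` at any of the times `0, 1, …, n`. -/
noncomputable def hitSurv {S : Type*} [Fintype S] [DecidableEq S] (p : S → S → ℝ) (j : S) :
    ℕ → S → ℝ
  | 0 => fun i => if i = j then 0 else 1
  | n + 1 => fun i => if i = j then 0 else ∑ l, p i l * hitSurv p j n l

/-- Expected hitting time of `j` from `i`: the expected number of steps for the chain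
started at `i` to first reach `j`, computed as `Σ_n P(T_j > n)`. -/
noncomputable def hitTime {S : Type*} [Fintype S] [DecidableEq S] (p : S → S → ℝ)
    (i j : S) : ℝ :=
  ∑' n : ℕ, hitSurv p j n i

/-- A unit-current potential from `i` to `j`: Kirchhoff's equations when a unit current
enters at `i` and leaves at `j`. -/
def IsUnitPotential [Fintype V] (w : V → V → ℝ) (i j : V) (φ : V → ℝ) : Prop :=
  (∀ k, k ≠ i → k ≠ j → ∑ l, w k l * (φ k - φ l) = 0) ∧
    (∑ l, w i l * (φ i - φ l) = 1) ∧
    (∑ l, w j l * (φ j - φ l) = -1)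

/-- `R` is the effective-resistance matrix of the weighted graph `w`:
`R a a = 0`, and for `a ≠ b`, `R a b = V_a - V_b` for a unit-current potential
from `a` to `b`. -/
def IsResistance [Fintype V] (w : V → V → ℝ) (R : V → V → ℝ) : Prop :=
  (∀ a, R a a = 0) ∧
    ∀ a b, a ≠ b → ∃ φ, IsUnitPotential w a b φ ∧ R a b = φ a - φ b

/-- The weight function of an unweighted graph: weight `1` on edges, `0` elsewhere. -/
noncomputable def aw (G : SimpleGraph V) [DecidableRel G.Adj] (a b : V) : ℝ :=
  if G.Adj a b then 1 else 0

/-- Probability of a given trajectory: `trajProb p i xs` is the probability that the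
chain started at `i` successively visits the vertices of the list `xs`. -/
noncomputable def trajProb {S : Type*} [Fintype S] (p : S → S → ℝ) : S → List S → ℝ
  | _, [] => 1
  | i, x :: xs => p i x * trajProb p x xs

/-- Probability that the walk started at `i` has not visited every vertex by time `n`. -/
noncomputable def notCoveredProb [Fintype V] [DecidableEq V] (p : V → V → ℝ) (n : ℕ)
    (i : V) : ℝ :=
  ∑ xs : Fin n → V, trajProb p i (List.ofFn xs) *
    (if (i :: List.ofFn xs).toFinset = Finset.univ then 0 else 1)

/-- The cover time from `i`: the expected number of steps for the walk started at `i`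
to have visited every vertex, computed as `Σ_n P(T_cov > n)`. -/
noncomputable def coverTime [Fintype V] [DecidableEq V] (p : V → V → ℝ) (i : V) : ℝ :=
  ∑' n : ℕ, notCoveredProb p n i

/-- `visitSurv p j k n i` is the probability that the chain started at `i` is at `k` at
time `n` without having visited `j` at any of the times `0, …, n`. -/
noncomputable def visitSurv [Fintype V] [DecidableEq V] (p : V → V → ℝ) (j k : V) :
    ℕ → V → ℝ
  | 0 => fun i => if i = j then 0 else if i = k then 1 else 0
  | n + 1 => fun i => if i = j then 0 else ∑ l, p i l * visitSurv p j k n l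

/-- `expVisits p i j k` is the expected number of visits to `k` (counting time `0`) of
the chain started at `i` strictly before its first visit to `j`. -/
noncomputable def expVisits [Fintype V] [DecidableEq V] (p : V → V → ℝ) (i j k : V) : ℝ :=
  ∑' n : ℕ, visitSurv p j k n i

/-- `reachBeforeAux p i j n l` is the probability that the walk started at `l` reaches `j`
within `n` steps without visiting `i` first. -/
noncomputable def reachBeforeAux [Fintype V] [DecidableEq V] (p : V → V → ℝ) (i j : V) :
    ℕ → V → ℝ
  | 0 => fun l => if l = j then 1 else 0
  | n + 1 => fun l =>
      if l = j then 1 else if l = i then 0 else ∑ m, p l m * reachBeforeAux p i j n m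

/-- The probability that the walk started at `i` reaches `j` before returning to `i`:
one step from `i` to `l`, then reach `j` before `i` (monotone limit in `n`). -/
noncomputable def escapeProb [Fintype V] [DecidableEq V] (p : V → V → ℝ) (i j : V) : ℝ :=
  ∑ l, p i l * ⨆ n, reachBeforeAux p i j n l

/-- `hitSurvSet p F n x` is the probability that the chain started at `x` has not visited
the set `F` at any of the times `0, …, n`. -/
noncomputable def hitSurvSet {S : Type*} [Fintype S] (p : S → S → ℝ) (F : S → Prop)
    [DecidablePred F] : ℕ → S → ℝ
  | 0 => fun x => if F x then 0 else 1
  | n + 1 => fun x => if F x then 0 else ∑ y, p x y * hitSurvSet p F n y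

/-- Expected hitting time of the set `F` from `x`, computed as `Σ_n P(T_F > n)`. -/
noncomputable def hitTimeSet {S : Type*} [Fintype S] (p : S → S → ℝ) (F : S → Prop)
    [DecidablePred F] (x : S) : ℝ :=
  ∑' n : ℕ, hitSurvSet p F n x

/-- The associated chain `𝒢` on pairs `(P, i)` (visited set, current vertex): from
`(P, i)` it moves to `(P ∪ {j}, j)` with probability `ω(i,j)/ω(i)`. -/
noncomputable def pairStep [Fintype V] [DecidableEq V] (w : V → V → ℝ)
    (s t : Finset V × V) : ℝ :=
  if t.1 = insert t.2 s.1 then walkStep w s.2 t.2 else 0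

/-- `exitProbAux p P j n i` is the probability that the walk started at `i` leaves `P`
within `n` steps and that the first vertex visited outside `P` is `j`. -/
noncomputable def exitProbAux [Fintype V] [DecidableEq V] (p : V → V → ℝ) (P : Finset V)
    (j : V) : ℕ → V → ℝ
  | 0 => fun i => if i ∈ P then 0 else if i = j then 1 else 0
  | n + 1 => fun i =>
      if i ∈ P then ∑ l, p i l * exitProbAux p P j n l else if i = j then 1 else 0

/-- The probability that the first vertex outside `P` visited by the walk started at `i`
is `j` (monotone limit in the number of allowed steps). -/
noncomputable def exitProb [Fintype V] [DecidableEq V] (p : V → V → ℝ) (P : Finset V)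
    (i j : V) : ℝ :=
  ⨆ n, exitProbAux p P j n i

/-- The negated weighted Laplacian `Δ` of the weighted graph `w` on `Fin n`. -/
noncomputable def negLaplacian (n : ℕ) (w : Fin n → Fin n → ℝ) :
    Matrix (Fin n) (Fin n) ℝ :=
  Matrix.of fun k l => if k = l then -(∑ m, w k m) else w k l

/-- `Δ₂`: the negated weighted Laplacian with its first row replaced by the first row of
the identity matrix. -/
noncomputable def delta2 (n : ℕ) (hn : 0 < n) (w : Fin n → Fin n → ℝ) :
    Matrix (Fin n) (Fin n) ℝ :=
  (negLaplacian n w).updateRow ⟨0, hn⟩ (fun l => if l = ⟨0, hn⟩ then 1 else 0)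

/-- The weight function obtained from `w` by adding weight `u` on the edge `{a, b}`. -/
noncomputable def addEdge [DecidableEq V] (w : V → V → ℝ) (a b : V) (u : ℝ)
    (x y : V) : ℝ :=
  w x y + (if (x = a ∧ y = b) ∨ (x = b ∧ y = a) then u else 0)

/-!
The potential `φ` of a unit current from `i` to `j`, grounded at `j`, is the Green function of the
walk killed at `j`: pairing `φ` with the Laplacian of a function recovers its value at `i` minus
its value at `j`. The Laplacian of `k ↦ P_k(T_j > n)` is `ω(k) (P_k(T_j > n) - P_k(T_j > n + 1))`
off `j`, so the pairing telescopes to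
`∑_{n < N} P_i(T_j > n) = ∑_k ω(k) (φ k - φ j) (1 - P_k(T_j > N))`. The right-hand side is bounded
in `N`; hence the series converges, its terms tend to `0`, and
`h_{ij} = ∑_k ω(k) (φ k - φ j)`. Superposition and reciprocity of potentials finally give
`2 (φ k - φ j) = R_{ij} + R_{jk} - R_{ik}`.
-/

section Potential

open Matrix

variable [Fintype V] [DecidableEq V] {w : V → V → ℝ}

/-- The Laplacian matrix of the weighted graph `w`: applied to a potential, its `k`-th entry is the
net current leaving `k`. Loops do not contribute. -/
noncomputable def weightedLapMatrix (w : V → V → ℝ) : Matrix V V ℝ :=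
  diagonal (vWeight w) - of w

lemma weightedLapMatrix_mulVec_apply (w : V → V → ℝ) (φ : V → ℝ) (k : V) :
    (weightedLapMatrix w *ᵥ φ) k = vWeight w k * φ k - ∑ l, w k l * φ l := by
  rw [weightedLapMatrix, sub_mulVec, Pi.sub_apply, mulVec_diagonal]
  rfl

lemma weightedLapMatrix_mulVec_apply_eq_sum (w : V → V → ℝ) (φ : V → ℝ) (k : V) :
    (weightedLapMatrix w *ᵥ φ) k = ∑ l, w k l * (φ k - φ l) := by
  simp only [weightedLapMatrix_mulVec_apply, vWeight, sum_mul, mul_sub, sum_sub_distrib]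

lemma isSymm_weightedLapMatrix (hsymm : ∀ a b, w a b = w b a) : (weightedLapMatrix w).IsSymm :=
  (isSymm_diagonal _).sub (IsSymm.ext fun a b => hsymm b a)

/-- The potential `φ` drives a unit current from `a` to `b`, as a single Laplace equation. For
`a ≠ b` this is `IsUnitPotential w a b φ`; unlike the latter it makes sense for `a = b`, where no
current flows. -/
def IsDipolePotential (w : V → V → ℝ) (a b : V) (φ : V → ℝ) : Prop :=
  weightedLapMatrix w *ᵥ φ = Pi.single a 1 - Pi.single b 1

lemma IsUnitPotential.isDipolePotential {a b : V} {φ : V → ℝ} (hφ : IsUnitPotential w a b φ)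
    (hab : a ≠ b) : IsDipolePotential w a b φ := by
  obtain ⟨hoff, ha, hb⟩ := hφ
  ext k
  rw [weightedLapMatrix_mulVec_apply_eq_sum, Pi.sub_apply]
  rcases eq_or_ne k a with rfl | hka
  · simp [ha, hab]
  rcases eq_or_ne k b with rfl | hkb
  · simp [hb, hka]
  · simp [hoff k hka hkb, hka, hkb]

namespace IsDipolePotential

variable {a b c d : V} {φ ψ : V → ℝ}

lemma add (hφ : IsDipolePotential w a b φ) (hψ : IsDipolePotential w b c ψ) :
    IsDipolePotential w a c (φ + ψ) := by
  rw [IsDipolePotential, mulVec_add, hφ, hψ, sub_add_sub_cancel]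

lemma sub_const (hφ : IsDipolePotential w a b φ) (t : ℝ) :
    IsDipolePotential w a b fun k => φ k - t := by
  rw [IsDipolePotential, ← hφ]
  ext k
  simp only [weightedLapMatrix_mulVec_apply_eq_sum, sub_sub_sub_cancel_right]

lemma dotProduct_mulVec_eq_sub (hφ : IsDipolePotential w a b φ) (hsymm : ∀ a b, w a b = w b a)
    (u : V → ℝ) : φ ⬝ᵥ weightedLapMatrix w *ᵥ u = u a - u b := by
  rw [dotProduct_mulVec, ← mulVec_transpose, isSymm_weightedLapMatrix hsymm, hφ, sub_dotProduct,
    single_one_dotProduct, single_one_dotProduct]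

lemma reciprocity (hφ : IsDipolePotential w a b φ) (hψ : IsDipolePotential w c d ψ)
    (hsymm : ∀ a b, w a b = w b a) : φ c - φ d = ψ a - ψ b := by
  rw [← hφ.dotProduct_mulVec_eq_sub hsymm, hψ, dotProduct_sub, dotProduct_single_one,
    dotProduct_single_one]

end IsDipolePotential

namespace IsResistance

variable {R : V → V → ℝ}

lemma exists_isDipolePotential (hR : IsResistance w R) (a b : V) :
    ∃ φ, IsDipolePotential w a b φ ∧ R a b = φ a - φ b := by
  rcases eq_or_ne a b with rfl | hab
  · exact ⟨0, by rw [IsDipolePotential, mulVec_zero, sub_self], by simp [hR.1]⟩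
  · obtain ⟨φ, hφ, hRφ⟩ := hR.2 a b hab
    exact ⟨φ, hφ.isDipolePotential hab, hRφ⟩

lemma eq_sub_of_isDipolePotential (hR : IsResistance w R) (hsymm : ∀ a b, w a b = w b a)
    {a b : V} {φ : V → ℝ} (hφ : IsDipolePotential w a b φ) : R a b = φ a - φ b := by
  obtain ⟨ψ, hψ, hRψ⟩ := hR.exists_isDipolePotential a b
  rw [hRψ, hφ.reciprocity hψ hsymm]

lemma two_mul_potential_sub (hR : IsResistance w R) (hsymm : ∀ a b, w a b = w b a) {a b : V}
    {φ : V → ℝ} (hφ : IsDipolePotential w a b φ) (c : V) :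
    2 * (φ c - φ b) = R a b + R b c - R a c := by
  obtain ⟨ψ, hψ, hRbc⟩ := hR.exists_isDipolePotential b c
  have hRab : R a b = φ a - φ b := hR.eq_sub_of_isDipolePotential hsymm hφ
  have hRac : R a c = (φ a + ψ a) - (φ c + ψ c) :=
    hR.eq_sub_of_isDipolePotential hsymm (hφ.add hψ)
  have hrecip : φ b - φ c = ψ a - ψ b := hφ.reciprocity hψ hsymm
  linear_combination hRac - hRab - hRbc - hrecip

end IsResistance

end Potential

section Survival

variable {S : Type*} [Fintype S] [DecidableEq S] {p : S → S → ℝ}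

lemma hitSurv_self (p : S → S → ℝ) (j : S) (n : ℕ) : hitSurv p j n j = 0 := by
  cases n <;> simp [hitSurv]

lemma hitSurv_zero_of_ne (p : S → S → ℝ) {i j : S} (hij : i ≠ j) : hitSurv p j 0 i = 1 :=
  if_neg hij

lemma hitSurv_succ_of_ne (p : S → S → ℝ) {i j : S} (hij : i ≠ j) (n : ℕ) :
    hitSurv p j (n + 1) i = ∑ l, p i l * hitSurv p j n l :=
  if_neg hij

lemma hitSurv_nonneg (hp : ∀ a b, 0 ≤ p a b) (j : S) (n : ℕ) (i : S) : 0 ≤ hitSurv p j n i := by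
  induction n generalizing i with
  | zero =>
    rcases eq_or_ne i j with rfl | hij
    · exact (hitSurv_self p i 0).ge
    · exact (hitSurv_zero_of_ne p hij).ge.trans' zero_le_one
  | succ n ih =>
    rcases eq_or_ne i j with rfl | hij
    · exact (hitSurv_self p i (n + 1)).ge
    · rw [hitSurv_succ_of_ne p hij]
      exact sum_nonneg fun l _ => mul_nonneg (hp i l) (ih l)

lemma hitSurv_le_one (hp : ∀ a b, 0 ≤ p a b) (hp_sum : ∀ a, ∑ b, p a b ≤ 1) (j : S) (n : ℕ)
    (i : S) : hitSurv p j n i ≤ 1 := by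
  induction n generalizing i with
  | zero =>
    rcases eq_or_ne i j with rfl | hij
    · exact (hitSurv_self p i 0).trans_le zero_le_one
    · exact (hitSurv_zero_of_ne p hij).le
  | succ n ih =>
    rcases eq_or_ne i j with rfl | hij
    · exact (hitSurv_self p i (n + 1)).trans_le zero_le_one
    · rw [hitSurv_succ_of_ne p hij]
      exact (sum_le_sum fun l _ => mul_le_of_le_one_right (hp i l) (ih l)).trans (hp_sum i)

end Survival

section HittingTime

open Matrix Filter Topology

variable [Fintype V] {w : V → V → ℝ}

lemma gWeight_eq_half_sum_vWeight (w : V → V → ℝ) : gWeight w = 1 / 2 * ∑ k, vWeight w k := by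
  simp only [gWeight, vWeight]
  ring

lemma walkStep_nonneg (hnonneg : ∀ a b, 0 ≤ w a b) (a b : V) : 0 ≤ walkStep w a b :=
  div_nonneg (hnonneg a b) (sum_nonneg fun l _ => hnonneg a l)

lemma sum_walkStep_le_one (w : V → V → ℝ) (a : V) : ∑ b, walkStep w a b ≤ 1 := by
  simp only [walkStep, ← sum_div]
  exact div_self_le_one (vWeight w a)

lemma vWeight_mul_walkStep (hnonneg : ∀ a b, 0 ≤ w a b) (a b : V) :
    vWeight w a * walkStep w a b = w a b := by
  refine mul_div_cancel_of_imp' fun hzero => ?_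
  exact (sum_eq_zero_iff_of_nonneg fun l _ => hnonneg a l).1 hzero b (mem_univ b)

variable [DecidableEq V] {i j : V} {φ : V → ℝ}

lemma weightedLapMatrix_mulVec_hitSurv (hnonneg : ∀ a b, 0 ≤ w a b) (n : ℕ) {k : V}
    (hkj : k ≠ j) :
    (weightedLapMatrix w *ᵥ hitSurv (walkStep w) j n) k =
      vWeight w k * (hitSurv (walkStep w) j n k - hitSurv (walkStep w) j (n + 1) k) := by
  rw [weightedLapMatrix_mulVec_apply, hitSurv_succ_of_ne _ hkj, mul_sub, mul_sum]
  simp only [← mul_assoc, vWeight_mul_walkStep hnonneg]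

lemma hitSurv_eq_sum_potential (hsymm : ∀ a b, w a b = w b a) (hnonneg : ∀ a b, 0 ≤ w a b)
    (hφ : IsDipolePotential w i j φ) (n : ℕ) :
    hitSurv (walkStep w) j n i = ∑ k, vWeight w k * (φ k - φ j) *
      (hitSurv (walkStep w) j n k - hitSurv (walkStep w) j (n + 1) k) := by
  have hgreen := (hφ.sub_const (φ j)).dotProduct_mulVec_eq_sub hsymm (hitSurv (walkStep w) j n)
  rw [hitSurv_self, sub_zero] at hgreen
  rw [← hgreen]
  refine sum_congr rfl fun k _ => ?_
  rcases eq_or_ne k j with rfl | hkj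
  · simp only [sub_self, mul_zero, zero_mul]
  · rw [weightedLapMatrix_mulVec_hitSurv hnonneg n hkj]
    ring

lemma sum_range_hitSurv_eq_sum_potential (hsymm : ∀ a b, w a b = w b a)
    (hnonneg : ∀ a b, 0 ≤ w a b) (hφ : IsDipolePotential w i j φ) (N : ℕ) :
    ∑ n ∈ range N, hitSurv (walkStep w) j n i =
      ∑ k, vWeight w k * (φ k - φ j) * (1 - hitSurv (walkStep w) j N k) := by
  simp only [hitSurv_eq_sum_potential hsymm hnonneg hφ]
  rw [sum_comm]
  refine sum_congr rfl fun k _ => ?_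
  rw [← mul_sum, sum_range_sub']
  rcases eq_or_ne k j with rfl | hkj
  · simp only [sub_self, mul_zero, zero_mul]
  · rw [hitSurv_zero_of_ne _ hkj]

lemma summable_hitSurv (hsymm : ∀ a b, w a b = w b a) (hnonneg : ∀ a b, 0 ≤ w a b)
    (hφ : IsDipolePotential w i j φ) : Summable fun n => hitSurv (walkStep w) j n i := by
  have hp := walkStep_nonneg hnonneg
  refine summable_of_sum_range_le (c := ∑ k, |vWeight w k * (φ k - φ j)|)
    (fun n => hitSurv_nonneg hp j n i) fun N => ?_
  rw [sum_range_hitSurv_eq_sum_potential hsymm hnonneg hφ]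
  refine sum_le_sum fun k _ => ?_
  have hsurv_nonneg := hitSurv_nonneg hp j N k
  have hsurv_le_one := hitSurv_le_one hp (sum_walkStep_le_one w) j N k
  calc vWeight w k * (φ k - φ j) * (1 - hitSurv (walkStep w) j N k)
      ≤ |vWeight w k * (φ k - φ j)| * (1 - hitSurv (walkStep w) j N k) :=
        mul_le_mul_of_nonneg_right (le_abs_self _) (sub_nonneg.2 hsurv_le_one)
    _ ≤ |vWeight w k * (φ k - φ j)| :=
        mul_le_of_le_one_right (abs_nonneg _) (sub_le_self 1 hsurv_nonneg)

lemma hasSum_hitSurv (hsymm : ∀ a b, w a b = w b a) (hnonneg : ∀ a b, 0 ≤ w a b)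
    {φ : V → V → ℝ} (hφ : ∀ i, IsDipolePotential w i j (φ i)) (i : V) :
    HasSum (fun n => hitSurv (walkStep w) j n i) (∑ k, vWeight w k * (φ i k - φ i j)) := by
  have hsummable (k : V) : Summable fun n => hitSurv (walkStep w) j n k :=
    summable_hitSurv hsymm hnonneg (hφ k)
  have htendsto_zero (k : V) : Tendsto (fun N => hitSurv (walkStep w) j N k) atTop (𝓝 0) :=
    (hsummable k).tendsto_atTop_zero
  rw [(hsummable i).hasSum_iff_tendsto_nat]
  simp only [sum_range_hitSurv_eq_sum_potential hsymm hnonneg (hφ i)]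
  refine tendsto_finsetSum _ fun k _ => ?_
  simpa only [sub_zero, mul_one] using
    ((htendsto_zero k).const_sub 1).const_mul (vWeight w k * (φ i k - φ i j))

end HittingTime

/- A loop at `k` counts `w k k` in `vWeight w k`, but only `w k k / 2` in `gWeight w`. -/
theorem hitting_time_resistance_formula_general [Fintype V] [DecidableEq V] {w : V → V → ℝ}
    (hsymm : ∀ a b, w a b = w b a) (hnonneg : ∀ a b, 0 ≤ w a b) {R : V → V → ℝ}
    (hR : IsResistance w R) (i j : V) :
    hitTime (walkStep w) i j =
      gWeight w * R i j + (1 / 2) * ∑ k, vWeight w k * (R j k - R i k) := by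
  choose φ hφ _ using fun i => hR.exists_isDipolePotential i j
  calc hitTime (walkStep w) i j
      = ∑ k, vWeight w k * (φ i k - φ i j) := (hasSum_hitSurv hsymm hnonneg hφ i).tsum_eq
    _ = ∑ k, (1 / 2) * (vWeight w k * R i j + vWeight w k * (R j k - R i k)) := by
        refine sum_congr rfl fun k _ => ?_
        linear_combination vWeight w k / 2 * hR.two_mul_potential_sub hsymm (hφ i) k
    _ = gWeight w * R i j + (1 / 2) * ∑ k, vWeight w k * (R j k - R i k) := by
        rw [← mul_sum, sum_add_distrib, ← sum_mul, gWeight_eq_half_sum_vWeight]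
        ring

/-- For a finite connected positively weighted graph,
`h_{ij} = ω(G)·R_{ij} + (1/2)·Σ_k ω(k)·(R_{jk} − R_{ik})`. -/
theorem hitting_time_resistance_formula
    {V : Type*} [Fintype V] [DecidableEq V] (w : V → V → ℝ) (hw : IsWeight w)
    (R : V → V → ℝ) (hR : IsResistance w R) (i j : V) :
    hitTime (walkStep w) i j =
      gWeight w * R i j + (1 / 2) * ∑ k, vWeight w k * (R j k - R i k) :=
  hitting_time_resistance_formula_general hw.1 hw.2.1 hR i j
end

section
/- Let G be a finite connected undirected graph on vertex set {1,…,n} with positive symmetric edge weights ω. Let Δ be the n×n matrix with Δ(k,l) = ω(k,l) for k ≠ l (with ω(k,l) = 0 when k and l are not adjacent) and Δ(k,k) = −Σ_{l∈N(k)} ω(k,l), and let Δ₂ be the matrix obtained from Δ by replacing its first row with the first row of the identity matrix. Then Δ₂ is invertible. -/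
open Finset

variable {V : Type*}

/-!
`Δ₂` is weakly chained diagonally dominant: every row is weakly diagonally dominant, the first row
is strictly so, and connectedness gives a chain of nonzero entries from any row to the first one.
Such a matrix is nonsingular by a maximum principle. If `A v = 0`, then at an index where `‖v i‖` is
maximal a weakly dominant row forces `‖v j‖ = ‖v i‖` whenever `A i j ≠ 0`, so the maximum propagates
along a chain to a strictly dominant row, and there it can only be `0`.
-/

section DiagonalDominance

variable {K : Type*} [NormedField K] [Fintype V] [DecidableEq V] {A : Matrix V V K}

/-- Weakly chained diagonally dominant matrices: every row is weakly diagonally dominant, and a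
strictly dominant row can be reached from each row in the directed graph whose edges are the
positions of the nonzero entries. -/
structure IsWeaklyChainedDiagDominant (A : Matrix V V K) : Prop where
  sum_row_le_diag : ∀ i, ∑ j ∈ univ.erase i, ‖A i j‖ ≤ ‖A i i‖
  exists_chain : ∀ i, ∃ j, Relation.ReflTransGen (fun k l => A k l ≠ 0) i j ∧
    ∑ l ∈ univ.erase j, ‖A j l‖ < ‖A j j‖

theorem norm_diag_mul_le_sum_of_mulVec_eq_zero {v : V → K} {i : V} (hv : A.mulVec v i = 0) :
    ‖A i i‖ * ‖v i‖ ≤ ∑ j ∈ univ.erase i, ‖A i j‖ * ‖v j‖ := by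
  have hdiag : A i i * v i = -∑ j ∈ univ.erase i, A i j * v j :=
    eq_neg_of_add_eq_zero_left <|
      (add_sum_erase univ (fun j => A i j * v j) (mem_univ i)).trans hv
  calc ‖A i i‖ * ‖v i‖ = ‖∑ j ∈ univ.erase i, A i j * v j‖ := by
        rw [← norm_mul, hdiag, norm_neg]
    _ ≤ ∑ j ∈ univ.erase i, ‖A i j‖ * ‖v j‖ :=
        norm_sum_le_of_le _ fun j _ => (norm_mul (A i j) (v j)).le

theorem eq_zero_of_sum_row_lt_diag {v : V → K} {i : V}
    (hA : ∑ j ∈ univ.erase i, ‖A i j‖ < ‖A i i‖) (hv : A.mulVec v i = 0)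
    (hmax : ∀ j, ‖v j‖ ≤ ‖v i‖) : v i = 0 := by
  have hle : ‖A i i‖ * ‖v i‖ ≤ (∑ j ∈ univ.erase i, ‖A i j‖) * ‖v i‖ :=
    calc ‖A i i‖ * ‖v i‖ ≤ ∑ j ∈ univ.erase i, ‖A i j‖ * ‖v j‖ :=
          norm_diag_mul_le_sum_of_mulVec_eq_zero hv
      _ ≤ ∑ j ∈ univ.erase i, ‖A i j‖ * ‖v i‖ := by gcongr with j; exact hmax j
      _ = (∑ j ∈ univ.erase i, ‖A i j‖) * ‖v i‖ := (sum_mul ..).symm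
  by_contra hvi
  exact hA.not_ge (le_of_mul_le_mul_right hle (norm_pos_iff.2 hvi))

theorem norm_eq_norm_of_sum_row_le_diag {v : V → K} {i j : V}
    (hA : ∑ l ∈ univ.erase i, ‖A i l‖ ≤ ‖A i i‖) (hv : A.mulVec v i = 0)
    (hmax : ∀ l, ‖v l‖ ≤ ‖v i‖) (hij : A i j ≠ 0) : ‖v j‖ = ‖v i‖ := by
  obtain rfl | hji := eq_or_ne j i
  · rfl
  have hterm : ∀ l ∈ univ.erase i, ‖A i l‖ * ‖v l‖ ≤ ‖A i l‖ * ‖v i‖ :=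
    fun l _ => mul_le_mul_of_nonneg_left (hmax l) (norm_nonneg _)
  have hsum : ∑ l ∈ univ.erase i, ‖A i l‖ * ‖v l‖ = ∑ l ∈ univ.erase i, ‖A i l‖ * ‖v i‖ :=
    (sum_le_sum hterm).antisymm <|
      calc ∑ l ∈ univ.erase i, ‖A i l‖ * ‖v i‖ = (∑ l ∈ univ.erase i, ‖A i l‖) * ‖v i‖ :=
            (sum_mul ..).symm
        _ ≤ ‖A i i‖ * ‖v i‖ := by gcongr
        _ ≤ ∑ l ∈ univ.erase i, ‖A i l‖ * ‖v l‖ := norm_diag_mul_le_sum_of_mulVec_eq_zero hv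
  have hj := (sum_eq_sum_iff_of_le hterm).1 hsum j (mem_erase.2 ⟨hji, mem_univ j⟩)
  exact mul_left_cancel₀ (norm_ne_zero_iff.2 hij) hj

theorem norm_eq_norm_of_reflTransGen {v : V → K} {i j : V}
    (hA : ∀ k, ∑ l ∈ univ.erase k, ‖A k l‖ ≤ ‖A k k‖) (hv : A.mulVec v = 0)
    (hmax : ∀ l, ‖v l‖ ≤ ‖v i‖) (hij : Relation.ReflTransGen (fun k l => A k l ≠ 0) i j) :
    ‖v j‖ = ‖v i‖ := by
  induction hij with
  | refl => rfl
  | @tail k l _ hkl ih =>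
    have hmax_k : ∀ l, ‖v l‖ ≤ ‖v k‖ := fun l => (hmax l).trans_eq ih.symm
    exact (norm_eq_norm_of_sum_row_le_diag (hA k) (congrFun hv k) hmax_k hkl).trans ih

theorem IsWeaklyChainedDiagDominant.eq_zero_of_mulVec_eq_zero
    (hA : IsWeaklyChainedDiagDominant A) {v : V → K} (hv : A.mulVec v = 0) : v = 0 := by
  cases isEmpty_or_nonempty V
  · exact Subsingleton.elim v 0
  obtain ⟨m, hmax⟩ := Finite.exists_max fun i => ‖v i‖
  obtain ⟨s, hms, hs⟩ := hA.exists_chain m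
  have hsm : ‖v s‖ = ‖v m‖ := norm_eq_norm_of_reflTransGen hA.sum_row_le_diag hv hmax hms
  have hmax_s : ∀ i, ‖v i‖ ≤ ‖v s‖ := fun i => (hmax i).trans_eq hsm.symm
  have hvs : v s = 0 := eq_zero_of_sum_row_lt_diag hs (congrFun hv s) hmax_s
  exact funext fun i => norm_le_zero_iff.1 ((hmax_s i).trans_eq (norm_eq_zero.2 hvs))

theorem IsWeaklyChainedDiagDominant.isUnit (hA : IsWeaklyChainedDiagDominant A) : IsUnit A :=
  Matrix.mulVec_injective_iff_isUnit.1 <|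
    (injective_iff_map_eq_zero A.mulVecLin).2 fun _ => hA.eq_zero_of_mulVec_eq_zero

end DiagonalDominance

section PinnedLaplacian

variable [Fintype V] [DecidableEq V] {w : V → V → ℝ} {r : V}

/-- The negated Laplacian of a weighted directed graph on an arbitrary finite vertex set, with the
row of `r` replaced by that of the identity matrix; `delta2` is the case `r = 0` on `Fin n`. A
diagonal weight `w k k` enters only the diagonal entry, and so acts as a killing rate at `k`. -/
noncomputable def pinnedNegLaplacian (w : V → V → ℝ) (r : V) : Matrix V V ℝ :=
  (Matrix.of fun k l => if k = l then -(∑ m, w k m) else w k l).updateRow r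
    (fun l => if l = r then 1 else 0)

theorem pinnedNegLaplacian_apply_root (w : V → V → ℝ) (r l : V) :
    pinnedNegLaplacian w r r l = if l = r then 1 else 0 := by
  simp [pinnedNegLaplacian]

theorem pinnedNegLaplacian_apply_self {k : V} (hk : k ≠ r) :
    pinnedNegLaplacian w r k k = -∑ m, w k m := by
  simp [pinnedNegLaplacian, hk]

theorem pinnedNegLaplacian_apply_of_ne {k l : V} (hk : k ≠ r) (hkl : k ≠ l) :
    pinnedNegLaplacian w r k l = w k l := by
  simp [pinnedNegLaplacian, hk, hkl]

theorem sum_row_pinnedNegLaplacian_root_lt_diag (w : V → V → ℝ) (r : V) :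
    ∑ l ∈ univ.erase r, ‖pinnedNegLaplacian w r r l‖ < ‖pinnedNegLaplacian w r r r‖ := by
  have hoff : ∑ l ∈ univ.erase r, ‖pinnedNegLaplacian w r r l‖ = 0 :=
    sum_eq_zero fun l hl => by
      rw [pinnedNegLaplacian_apply_root, if_neg (ne_of_mem_erase hl), norm_zero]
  rw [hoff, pinnedNegLaplacian_apply_root, if_pos rfl, norm_one]
  exact one_pos

theorem sum_row_pinnedNegLaplacian_le_diag {k : V} (hw : ∀ l, 0 ≤ w k l) (hk : k ≠ r) :
    ∑ l ∈ univ.erase k, ‖pinnedNegLaplacian w r k l‖ ≤ ‖pinnedNegLaplacian w r k k‖ :=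
  calc ∑ l ∈ univ.erase k, ‖pinnedNegLaplacian w r k l‖ = ∑ l ∈ univ.erase k, w k l :=
        sum_congr rfl fun l hl => by
          rw [pinnedNegLaplacian_apply_of_ne hk (ne_of_mem_erase hl).symm,
            Real.norm_of_nonneg (hw l)]
    _ ≤ ∑ l, w k l := sum_le_univ_sum_of_nonneg hw
    _ = ‖pinnedNegLaplacian w r k k‖ := by
        rw [pinnedNegLaplacian_apply_self hk, norm_neg,
          Real.norm_of_nonneg (sum_nonneg fun l _ => hw l)]

theorem reflTransGen_pinnedNegLaplacian_ne_zero {a : V}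
    (h : Relation.ReflTransGen (fun x y => 0 < w x y) a r) :
    Relation.ReflTransGen (fun x y => pinnedNegLaplacian w r x y ≠ 0) a r := by
  induction h using Relation.ReflTransGen.head_induction_on with
  | refl => rfl
  | @head x y hxy _ ih =>
    obtain rfl | hxr := eq_or_ne x r
    · rfl
    obtain rfl | hne := eq_or_ne x y
    · exact ih
    · exact ih.head (by rw [pinnedNegLaplacian_apply_of_ne hxr hne]; exact hxy.ne')

theorem isWeaklyChainedDiagDominant_pinnedNegLaplacian (hw : ∀ a b, 0 ≤ w a b)
    (hr : ∀ a, Relation.ReflTransGen (fun x y => 0 < w x y) a r) :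
    IsWeaklyChainedDiagDominant (pinnedNegLaplacian w r) where
  sum_row_le_diag k := by
    obtain rfl | hk := eq_or_ne k r
    · exact (sum_row_pinnedNegLaplacian_root_lt_diag w k).le
    · exact sum_row_pinnedNegLaplacian_le_diag (hw k) hk
  exists_chain k :=
    ⟨r, reflTransGen_pinnedNegLaplacian_ne_zero (hr k),
      sum_row_pinnedNegLaplacian_root_lt_diag w r⟩

theorem delta2_invertible_general (w : V → V → ℝ) (r : V) (hw : ∀ a b, 0 ≤ w a b)
    (hr : ∀ a, Relation.ReflTransGen (fun x y => 0 < w x y) a r) :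
    IsUnit (pinnedNegLaplacian w r) :=
  (isWeaklyChainedDiagDominant_pinnedNegLaplacian hw hr).isUnit

end PinnedLaplacian

/-- For a connected weighted graph on `{1,…,n}`, the matrix `Δ₂`
(the negated weighted Laplacian with its first row replaced by the first row of the
identity) is invertible. -/
theorem delta2_invertible (n : ℕ) (hn : 0 < n) (w : Fin n → Fin n → ℝ)
    (hw : IsWeight w) :
    IsUnit (delta2 n hn w) :=
  delta2_invertible_general w ⟨0, hn⟩ hw.2.1 fun a => hw.2.2.2 a _
end
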